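/- For every positive integer n, the number of pairs (x, y) ∈ ℤ² with x² + 2y² = n, x ≡ 0 (mod 2), and y ≡ 1 (mod 2) equals 2 ∑_{d|(n/2)} χ₋₈(d) − 2 ∑_{d|(n/4)} χ₋₈(d). -/

import Mathlib

open Finset

/-- The Kronecker symbol `(-8/d)` for positive `d`. -/
def chiM8 (d : ℕ) : ℤ :=
  if d % 8 = 1 ∨ d % 8 = 3 then 1 else if d % 8 = 5 ∨ d % 8 = 7 then -1 else 0

/-- `Sdiv χ n k = ∑_{d ∣ n/k} χ d`, interpreted as `0` when `k` does not divide `n`. -/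
def Sdiv (χ : ℕ → ℤ) (n k : ℕ) : ℤ := if k ∣ n then ∑ d ∈ (n / k).divisors, χ d else 0

/-- The representations of `n` by the form `x² + 2y²`. -/
def reps (n : ℕ) : Set (ℤ × ℤ) := {z | z.1 ^ 2 + 2 * z.2 ^ 2 = (n : ℤ)}

theorem reps_finite (n : ℕ) : (reps n).Finite := by
  refine ((Set.finite_Icc (-(n : ℤ)) n).prod (Set.finite_Icc (-(n : ℤ)) n)).subset ?_
  rintro ⟨x, y⟩ h
  simp only [reps, Set.mem_ofPred_eq] at h
  simp only [Set.mem_prod, Set.mem_Icc]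
  refine ⟨⟨?_, ?_⟩, ?_, ?_⟩ <;> nlinarith [sq_nonneg x, sq_nonneg y, Int.le_self_sq x,
    Int.le_self_sq y, Int.le_self_sq (-x), Int.le_self_sq (-y)]

theorem chiM8_mul (a b : ℕ) : chiM8 (a * b) = chiM8 a * chiM8 b := by
  have ha : a % 8 < 8 := Nat.mod_lt _ (by norm_num)
  have hb : b % 8 < 8 := Nat.mod_lt _ (by norm_num)
  simp only [chiM8, Nat.mul_mod a b 8]
  generalize a % 8 = r at *
  generalize b % 8 = s at *
  interval_cases r <;> interval_cases s <;> rfl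

theorem divisors_prime_mul {p n : ℕ} (hp : p.Prime) (hn : n ≠ 0) :
    (p * n).divisors = n.divisors ∪ n.divisors.image (p * ·) := by
  ext d
  simp only [Nat.mem_divisors, mem_union, mem_image]
  constructor
  · rintro ⟨h, -⟩
    by_cases hd : p ∣ d
    · obtain ⟨e, rfl⟩ := hd
      exact Or.inr ⟨e, ⟨Nat.dvd_of_mul_dvd_mul_left hp.pos h, hn⟩, rfl⟩
    · exact Or.inl ⟨(((Nat.Prime.coprime_iff_not_dvd hp).2 hd).symm).dvd_of_dvd_mul_left h, hn⟩
  · rintro (⟨h, -⟩ | ⟨e, ⟨h, -⟩, rfl⟩)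
    · exact ⟨h.mul_left p, mul_ne_zero hp.ne_zero hn⟩
    · exact ⟨mul_dvd_mul_left p h, mul_ne_zero hp.ne_zero hn⟩

theorem sum_divisors_image_mul {p : ℕ} (hp : p.Prime) (n : ℕ) :
    ∑ d ∈ n.divisors.image (p * ·), chiM8 d = chiM8 p * ∑ d ∈ n.divisors, chiM8 d := by
  rw [sum_image fun a _ b _ h => Nat.eq_of_mul_eq_mul_left hp.pos h, mul_sum]
  exact sum_congr rfl fun d _ => chiM8_mul p d

/-- The Hecke relation for the divisor sums of `χ₋₈`. -/
theorem sum_divisors_prime_mul {p n : ℕ} (hp : p.Prime) (hn : n ≠ 0) :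
    ∑ d ∈ (p * n).divisors, chiM8 d =
      (1 + chiM8 p) * ∑ d ∈ n.divisors, chiM8 d - chiM8 p * Sdiv chiM8 n p := by
  have hinter : ∑ d ∈ n.divisors ∩ n.divisors.image (p * ·), chiM8 d =
      chiM8 p * Sdiv chiM8 n p := by
    unfold Sdiv
    split_ifs with h
    · obtain ⟨m, rfl⟩ := h
      have hm : m ≠ 0 := right_ne_zero_of_mul hn
      rw [Nat.mul_div_cancel_left _ hp.pos, ← sum_divisors_image_mul hp]
      congr 1
      ext d
      simp only [mem_inter, mem_image, Nat.mem_divisors]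
      constructor
      · rintro ⟨⟨h, -⟩, e, -, rfl⟩
        exact ⟨e, ⟨Nat.dvd_of_mul_dvd_mul_left hp.pos h, hm⟩, rfl⟩
      · rintro ⟨e, ⟨h, -⟩, rfl⟩
        exact ⟨⟨mul_dvd_mul_left p h, hn⟩, e, ⟨h.mul_left p, hn⟩, rfl⟩
    · rw [mul_zero]
      refine sum_eq_zero fun d hd => absurd ?_ h
      simp only [mem_inter, mem_image, Nat.mem_divisors] at hd
      obtain ⟨⟨hd, -⟩, e, -, rfl⟩ := hd
      exact (Dvd.intro e rfl).trans hd
  have h := sum_union_inter (s₁ := n.divisors) (s₂ := n.divisors.image (p * ·)) (f := chiM8)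
  rw [← divisors_prime_mul hp hn, hinter, sum_divisors_image_mul hp] at h
  linarith

/-- Pigeonhole: a prime modulo which `-2` is a square is of the form `x² + 2y²`. -/
theorem exists_eq_sq_add_two_sq {p : ℕ} (hp : p.Prime) (h : IsSquare (-2 : ZMod p)) :
    ∃ a b : ℤ, a ^ 2 + 2 * b ^ 2 = p := by
  have := Fact.mk hp
  obtain ⟨t, ht⟩ := h
  set k := Nat.sqrt p
  have hk : k * k < p := by
    refine lt_of_le_of_ne (Nat.sqrt_le p) fun h => ?_
    exact hp.prime.not_isSquare ⟨k, h.symm⟩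
  have hk' : p < (k + 1) * (k + 1) := Nat.lt_succ_sqrt p
  have hcard : #(univ : Finset (ZMod p)) < #(range (k + 1) ×ˢ range (k + 1)) := by
    rwa [card_univ, ZMod.card, card_product, card_range]
  obtain ⟨⟨x, y⟩, hxy, ⟨x', y'⟩, hxy', hne, heq⟩ :=
    exists_ne_map_eq_of_card_lt_of_maps_to hcard
      (f := fun z : ℕ × ℕ => (z.1 : ZMod p) - t * z.2) (by simp [Set.MapsTo])
  simp only [mem_product, mem_range] at hxy hxy'
  set u : ℤ := x - x' with hu
  set v : ℤ := y - y' with hv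
  have hk2 : (k : ℤ) * k < p := by exact_mod_cast hk
  have hu2 : u ^ 2 < p := by
    nlinarith [mul_nonneg (by omega : 0 ≤ k + u) (by omega : 0 ≤ k - u)]
  have hv2 : v ^ 2 < p := by
    nlinarith [mul_nonneg (by omega : 0 ≤ k + v) (by omega : 0 ≤ k - v)]
  have hpos : 0 < u ^ 2 + 2 * v ^ 2 := by
    by_cases hu0 : u = 0
    · have hv0 : v ≠ 0 := fun hv0 => hne (Prod.ext (by grind) (by grind))
      positivity
    · positivity
  have hdvd : (p : ℤ) ∣ u ^ 2 + 2 * v ^ 2 := by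
    rw [← ZMod.intCast_zmod_eq_zero_iff_dvd, hu, hv]
    push_cast
    linear_combination (x - x' + t * (y - y') : ZMod p) * heq - (y - y' : ZMod p) ^ 2 * ht
  obtain ⟨c, hc⟩ := hdvd
  have hp0 : (0 : ℤ) < p := by exact_mod_cast hp.pos
  have hc0 : 0 < c := by nlinarith
  have hc3 : c < 3 := by nlinarith
  interval_cases c
  · exact ⟨u, v, by linarith⟩
  · rcases Int.emod_two_eq_zero_or_one u with h | h
    · obtain ⟨w, hw⟩ := Int.dvd_of_emod_eq_zero h
      rw [hw] at hc
      exact ⟨v, w, by linarith⟩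
    · obtain ⟨w, hw⟩ := Int.odd_iff.2 h
      rw [hw] at hc
      ring_nf at hc
      omega

theorem dvd_of_dvd_sq_add_two_sq {p : ℕ} (hp : p.Prime) (h : ¬ IsSquare (-2 : ZMod p)) {x y : ℤ}
    (hxy : (p : ℤ) ∣ x ^ 2 + 2 * y ^ 2) : (p : ℤ) ∣ x ∧ (p : ℤ) ∣ y := by
  have := Fact.mk hp
  have hpp : Prime (p : ℤ) := Nat.prime_iff_prime_int.1 hp
  have hy : (p : ℤ) ∣ y := by
    by_contra hy
    rw [← ZMod.intCast_zmod_eq_zero_iff_dvd] at hxy hy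
    push_cast at hxy
    refine h ⟨x / y, ?_⟩
    field_simp
    linear_combination -hxy
  refine ⟨hpp.dvd_of_dvd_pow (n := 2) ?_, hy⟩
  exact (dvd_add_left ((dvd_pow hy two_ne_zero).mul_left 2)).1 hxy

theorem smul_mem_reps {p n : ℕ} (hp : p ≠ 0) (u v : ℤ) :
    (p * u, p * v) ∈ reps (p * (p * n)) ↔ (u, v) ∈ reps n := by
  have : ((p : ℤ) * p) ≠ 0 := by positivity
  simp only [reps, Set.mem_ofPred_eq]
  push_cast
  constructor
  · intro h
    apply mul_left_cancel₀ this
    linarith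
  · intro h
    rw [← h]; ring

/-- The multiples of `p` among the representations of `p * n`. -/
theorem ncard_reps_dvd {p : ℕ} (hp : p.Prime) (n : ℕ) :
    {z ∈ reps (p * n) | (p : ℤ) ∣ z.1 ∧ (p : ℤ) ∣ z.2}.ncard =
      if p ∣ n then (reps (n / p)).ncard else 0 := by
  have hp0 : (p : ℤ) ≠ 0 := by exact_mod_cast hp.ne_zero
  split_ifs with h
  · obtain ⟨m, rfl⟩ := h
    rw [Nat.mul_div_cancel_left _ hp.pos]
    have : {z ∈ reps (p * (p * m)) | (p : ℤ) ∣ z.1 ∧ (p : ℤ) ∣ z.2} =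
        (fun z : ℤ × ℤ => ((p : ℤ) * z.1, (p : ℤ) * z.2)) '' reps m := by
      ext ⟨x, y⟩
      constructor
      · rintro ⟨hz, ⟨u, rfl⟩, ⟨v, rfl⟩⟩
        exact ⟨(u, v), (smul_mem_reps hp.ne_zero u v).1 hz, rfl⟩
      · rintro ⟨⟨u, v⟩, hz, h⟩
        cases h
        exact ⟨(smul_mem_reps hp.ne_zero u v).2 hz, dvd_mul_right _ _, dvd_mul_right _ _⟩
    rw [this, Set.ncard_image_of_injective]
    rintro ⟨u, v⟩ ⟨u', v'⟩ h
    simpa [hp.ne_zero] using h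
  · convert Set.ncard_empty (ℤ × ℤ)
    refine Set.eq_empty_of_forall_notMem ?_
    rintro ⟨x, y⟩ ⟨hz, ⟨u, rfl⟩, ⟨v, rfl⟩⟩
    refine h (Int.natCast_dvd_natCast.1 ⟨u ^ 2 + 2 * v ^ 2, ?_⟩)
    simp only [reps, Set.mem_ofPred_eq] at hz
    push_cast at hz
    apply mul_left_cancel₀ hp0
    linarith

/-- Multiples of `a + b√-2` among the representations of `p * n`, where `p = a² + 2b²`. -/
theorem ncard_reps_dvd_factor {p : ℕ} (hp : p.Prime) {a b : ℤ} (hab : a ^ 2 + 2 * b ^ 2 = p)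
    (n : ℕ) : {z ∈ reps (p * n) | (p : ℤ) ∣ a * z.2 - b * z.1}.ncard = (reps n).ncard := by
  have hp0 : (p : ℤ) ≠ 0 := by exact_mod_cast hp.ne_zero
  have hpp : Prime (p : ℤ) := Nat.prime_iff_prime_int.1 hp
  have : {z ∈ reps (p * n) | (p : ℤ) ∣ a * z.2 - b * z.1} =
      (fun z : ℤ × ℤ => (a * z.1 - 2 * b * z.2, a * z.2 + b * z.1)) '' reps n := by
    ext ⟨x, y⟩
    simp only [reps, Set.mem_ofPred_eq, Set.mem_image, Prod.mk.injEq, Prod.exists]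
    push_cast
    constructor
    · rintro ⟨hz, v, hv⟩
      have hu : (p : ℤ) ∣ a * x + 2 * b * y := by
        refine hpp.dvd_of_dvd_pow (n := 2) ⟨p * n - 2 * p * v ^ 2, ?_⟩
        linear_combination (x ^ 2 + 2 * y ^ 2) * hab + p * hz - 2 * (a * y - b * x + p * v) * hv
      obtain ⟨u, hu⟩ := hu
      refine ⟨u, v, ?_, ?_, ?_⟩
      · apply mul_left_cancel₀ hp0
        apply mul_left_cancel₀ hp0
        linear_combination (x ^ 2 + 2 * y ^ 2) * hab + p * hz - 2 * (a * y - b * x + p * v) * hv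
          - (a * x + 2 * b * y + p * u) * hu
      · apply mul_left_cancel₀ hp0
        linear_combination x * hab - a * hu + 2 * b * hv
      · apply mul_left_cancel₀ hp0
        linear_combination y * hab - a * hv - b * hu
    · rintro ⟨u, v, h, rfl, rfl⟩
      refine ⟨?_, v, ?_⟩
      · linear_combination (u ^ 2 + 2 * v ^ 2) * hab + p * h
      · linear_combination v * hab
  rw [this, Set.ncard_image_of_injective]
  rintro ⟨u, v⟩ ⟨u', v'⟩ h
  simp only [Prod.mk.injEq] at h
  obtain ⟨h1, h2⟩ := h
  refine Prod.ext (mul_left_cancel₀ hp0 ?_) (mul_left_cancel₀ hp0 ?_)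
  · linear_combination (u' - u) * hab + a * h1 + 2 * b * h2
  · linear_combination (v' - v) * hab + a * h2 - b * h1

/-- The Hecke relation for the representation numbers of `x² + 2y²`. -/
theorem ncard_reps_prime_mul {p : ℕ} (hp : p.Prime) (hp2 : p % 2 = 1) (n : ℕ) :
    ((reps (p * n)).ncard : ℤ) = (1 + chiM8 p) * (reps n).ncard -
      chiM8 p * (if p ∣ n then (reps (n / p)).ncard else 0 : ℕ) := by
  have := Fact.mk hp
  have hpp : Prime (p : ℤ) := Nat.prime_iff_prime_int.1 hp
  rw [← ncard_reps_dvd hp]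
  have hsq := ZMod.exists_sq_eq_neg_two_iff (p := p) (by omega)
  by_cases h : IsSquare (-2 : ZMod p)
  · have hchi : chiM8 p = 1 := if_pos (hsq.1 h)
    obtain ⟨a, b, hab⟩ := exists_eq_sq_add_two_sq hp h
    have h1 := ncard_reps_dvd_factor hp hab n
    have h2 := ncard_reps_dvd_factor hp (a := a) (b := -b) (by rw [neg_sq, hab]) n
    set A := {z ∈ reps (p * n) | (p : ℤ) ∣ a * z.2 - b * z.1}
    set B := {z ∈ reps (p * n) | (p : ℤ) ∣ a * z.2 - -b * z.1}
    have hpn : ¬ (p : ℤ) ∣ 2 := by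
      intro h
      have := Nat.le_of_dvd two_pos (Int.natCast_dvd_natCast.1 h)
      have := hp.two_le
      omega
    have hndvd : ¬ ((p : ℤ) ∣ a ∧ (p : ℤ) ∣ b) := by
      rintro ⟨⟨c, rfl⟩, ⟨d, rfl⟩⟩
      refine hpp.not_isUnit (IsUnit.of_mul_eq_one (c ^ 2 + 2 * d ^ 2) ?_)
      apply mul_left_cancel₀ hpp.ne_zero
      linear_combination hab
    have hpb : ¬ (p : ℤ) ∣ b := fun hb => hndvd ⟨hpp.dvd_of_dvd_pow (n := 2)
      ((dvd_add_left ((dvd_pow hb two_ne_zero).mul_left 2)).1 (hab ▸ dvd_rfl)), hb⟩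
    have hpa : ¬ (p : ℤ) ∣ a := fun ha => hpb <| hpp.dvd_of_dvd_pow (n := 2) <|
      (hpp.dvd_or_dvd ((dvd_add_right (dvd_pow ha two_ne_zero)).1 (hab ▸ dvd_rfl))).resolve_left hpn
    have hunion : reps (p * n) = A ∪ B := by
      ext ⟨x, y⟩
      refine ⟨fun hz => ?_, fun hz => hz.elim (·.1) (·.1)⟩
      have hz' := hz
      simp only [reps, Set.mem_ofPred_eq] at hz'
      push_cast at hz'
      have : (p : ℤ) ∣ (a * y - b * x) * (a * y - -b * x) :=
        ⟨y ^ 2 - b ^ 2 * n, by linear_combination y ^ 2 * hab - b ^ 2 * hz'⟩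
      exact (hpp.dvd_or_dvd this).imp (⟨hz, ·⟩) (⟨hz, ·⟩)
    have hinter : {z ∈ reps (p * n) | (p : ℤ) ∣ z.1 ∧ (p : ℤ) ∣ z.2} = A ∩ B := by
      ext ⟨x, y⟩
      constructor
      · rintro ⟨hz, hx, hy⟩
        exact ⟨⟨hz, dvd_sub (hy.mul_left _) (hx.mul_left _)⟩,
          ⟨hz, dvd_sub (hy.mul_left _) (hx.mul_left _)⟩⟩
      · rintro ⟨⟨hz, h1⟩, ⟨-, h2⟩⟩
        have hy : (p : ℤ) ∣ 2 * (a * y) := by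
          have := dvd_add h1 h2
          ring_nf at this ⊢
          exact this
        have hx : (p : ℤ) ∣ 2 * (b * x) := by
          have := dvd_sub h2 h1
          ring_nf at this ⊢
          exact this
        exact ⟨hz, (((hpp.dvd_or_dvd hx).resolve_left hpn |> hpp.dvd_or_dvd).resolve_left hpb),
          (((hpp.dvd_or_dvd hy).resolve_left hpn |> hpp.dvd_or_dvd).resolve_left hpa)⟩
    have hcard := Set.ncard_union_add_ncard_inter A B
      ((reps_finite _).subset fun _ hz => hz.1) ((reps_finite _).subset fun _ hz => hz.1)
    rw [← hunion, ← hinter, h1, h2] at hcard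
    rw [hchi]
    zify at hcard
    linarith
  · have hchi : chiM8 p = -1 := by
      have := mt hsq.2 h
      unfold chiM8
      rw [if_neg this, if_pos (by omega)]
    have : {z ∈ reps (p * n) | (p : ℤ) ∣ z.1 ∧ (p : ℤ) ∣ z.2} = reps (p * n) := by
      refine Set.sep_eq_self_iff_mem_true.2 fun z hz => dvd_of_dvd_sq_add_two_sq hp h ⟨n, ?_⟩
      simpa [reps] using hz
    rw [this, hchi]
    ring

theorem ncard_reps_one : (reps 1).ncard = 2 := by
  have : reps 1 = {((1 : ℤ), (0 : ℤ)), (-1, 0)} := by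
    ext ⟨x, y⟩
    simp only [reps, Set.mem_ofPred_eq, Set.mem_insert_iff, Set.mem_singleton_iff, Prod.mk.injEq]
    constructor
    · intro h
      have hy : y = 0 := by
        by_contra hy
        have := sq_nonneg x
        have : 0 < y ^ 2 := by positivity
        push_cast at h
        linarith
      subst hy
      have hx : x ^ 2 = 1 := by simpa using h
      rcases sq_eq_one_iff.1 hx with h | h <;> simp [h]
    · rintro (⟨rfl, rfl⟩ | ⟨rfl, rfl⟩) <;> norm_num
  rw [this, Set.ncard_pair (by simp)]

/-- Dirichlet's formula for the number of representations of odd `m` by `x² + 2y²`. -/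
theorem ncard_reps_of_odd (m : ℕ) (hm : m % 2 = 1) :
    ((reps m).ncard : ℤ) = 2 * ∑ d ∈ m.divisors, chiM8 d := by
  induction m using Nat.strong_induction_on with
  | _ m ih =>
    rcases eq_or_ne m 1 with rfl | h1
    · rw [ncard_reps_one]; simp [chiM8]
    obtain ⟨p, hp, n, rfl⟩ := Nat.exists_prime_and_dvd h1
    have hn : n ≠ 0 := by rintro rfl; simp at hm
    obtain ⟨hp2, hn2⟩ := Nat.odd_mul.1 (Nat.odd_iff.2 hm)
    rw [Nat.odd_iff] at hp2 hn2
    have hlt : n < p * n := lt_mul_of_one_lt_left (Nat.pos_of_ne_zero hn) hp.one_lt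
    rw [ncard_reps_prime_mul hp hp2, sum_divisors_prime_mul hp hn, ih n hlt hn2]
    unfold Sdiv
    split_ifs with h
    · obtain ⟨k, rfl⟩ := h
      have hk : k ≤ p * k := Nat.le_mul_of_pos_left k hp.pos
      rw [Nat.mul_div_cancel_left _ hp.pos,
        ih k (hk.trans_lt hlt) (Nat.odd_iff.1 (Nat.odd_mul.1 (Nat.odd_iff.2 hn2)).2)]
      ring
    · push_cast
      ring

theorem sum_divisors_two_mul (k : ℕ) (hk : k ≠ 0) :
    ∑ d ∈ (2 * k).divisors, chiM8 d = ∑ d ∈ k.divisors, chiM8 d := by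
  rw [sum_divisors_prime_mul Nat.prime_two hk]
  simp [chiM8]

theorem rep_x2_2y2_x0mod2_y1mod2 (n : ℕ) (hn : 0 < n) :
    ({p : ℤ × ℤ | p.1 ^ 2 + 2 * p.2 ^ 2 = (n : ℤ) ∧ p.1 % 2 = 0 ∧ p.2 % 2 = 1}.ncard : ℤ) =
      2 * Sdiv chiM8 n 2 - 2 * Sdiv chiM8 n 4 := by
  by_cases h : n % 4 = 2
  · obtain ⟨m, rfl⟩ : 2 ∣ n := by omega
    have hm : m % 2 = 1 := by omega
    have hset : {p : ℤ × ℤ | p.1 ^ 2 + 2 * p.2 ^ 2 = ((2 * m : ℕ) : ℤ) ∧ p.1 % 2 = 0 ∧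
        p.2 % 2 = 1} = (fun z : ℤ × ℤ => (2 * z.2, z.1)) '' reps m := by
      ext ⟨x, y⟩
      simp only [reps, Set.mem_ofPred_eq, Set.mem_image, Prod.mk.injEq, Prod.exists, Nat.cast_mul,
        Nat.cast_ofNat]
      constructor
      · rintro ⟨h, hx, -⟩
        obtain ⟨u, rfl⟩ := Int.dvd_of_emod_eq_zero hx
        exact ⟨y, u, by linarith, rfl, rfl⟩
      · rintro ⟨y, u, h, rfl, rfl⟩
        refine ⟨by linarith, by omega, ?_⟩
        rcases Int.emod_two_eq_zero_or_one y with hy | hy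
        · obtain ⟨v, rfl⟩ := Int.dvd_of_emod_eq_zero hy
          ring_nf at h
          omega
        · exact hy
    rw [hset, Set.ncard_image_of_injective, ncard_reps_of_odd m hm, Sdiv, Sdiv,
      if_pos (dvd_mul_right 2 m), if_neg (by omega), Nat.mul_div_cancel_left _ two_pos]
    · ring
    · rintro ⟨u, v⟩ ⟨u', v'⟩ h
      simpa [and_comm] using h
  · have hset : {p : ℤ × ℤ | p.1 ^ 2 + 2 * p.2 ^ 2 = (n : ℤ) ∧ p.1 % 2 = 0 ∧ p.2 % 2 = 1} = ∅ := by
      refine Set.eq_empty_of_forall_notMem ?_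
      rintro ⟨x, y⟩ ⟨h', hx, hy⟩
      obtain ⟨u, rfl⟩ := Int.dvd_of_emod_eq_zero hx
      obtain ⟨v, rfl⟩ := Int.odd_iff.2 hy
      ring_nf at h'
      omega
    rw [hset, Set.ncard_empty]
    unfold Sdiv
    by_cases h4 : 4 ∣ n
    · obtain ⟨k, rfl⟩ := h4
      have : 4 * k / 2 = 2 * k := by omega
      rw [if_pos (by omega), if_pos (by omega), this, Nat.mul_div_cancel_left _ (by norm_num),
        sum_divisors_two_mul k (by omega)]
      simp
    · rw [if_neg (by omega), if_neg h4]
      simp
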